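/- Let F : 𝕋 → ℂ be defined by F(e^{it}) = |t| for t ∈ [−π, π], and let f = P[F] be its Poisson integral. Then for every z ∈ 𝔻, i z f_z(z) = −(2i/π) Σ_{n≥0} z^{2n+1}/(2n+1) = −(i/π) log((1+z)/(1−z)) (principal branch of the logarithm). In particular |f_z(r)| → ∞ as r → 1⁻, so f_z is not bounded on 𝔻, even though Ḟ ∈ L^∞(𝕋). -/

import Mathlib

open MeasureTheory Complex Metric Set Filter
open scoped Real Topology ENNReal

noncomputable section

/-- The Poisson kernel `P(z) = (1-|z|^2)/|1-z|^2`. -/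
def poissonKer (z : ℂ) : ℝ := (1 - ‖z‖ ^ 2) / ‖1 - z‖ ^ 2

/-- The Poisson integral of a boundary function `F` defined on the unit circle. -/
def poissonInt (F : ℂ → ℂ) (z : ℂ) : ℂ :=
  (1 / (2 * π)) * ∫ t in (0:ℝ)..(2 * π),
    (poissonKer (z * Complex.exp (-(t : ℂ) * Complex.I)) : ℂ) *
      F (Complex.exp ((t : ℂ) * Complex.I))

/-- The Poisson integral of a (2π-periodic) function of the angular variable. -/
def poissonIntR (φ : ℝ → ℂ) (z : ℂ) : ℂ :=
  (1 / (2 * π)) * ∫ t in (0:ℝ)..(2 * π),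
    (poissonKer (z * Complex.exp (-(t : ℂ) * Complex.I)) : ℂ) * φ t

/-- The conjugate Poisson kernel `P̃(z) = Im((1+z)/(1-z))`. -/
def conjPoissonKer (z : ℂ) : ℝ := ((1 + z) / (1 - z)).im

/-- The conjugate Poisson integral of a function of the angular variable. -/
def conjPoissonIntR (φ : ℝ → ℂ) (z : ℂ) : ℂ :=
  (1 / (2 * π)) * ∫ t in (0:ℝ)..(2 * π),
    (conjPoissonKer (z * Complex.exp (-(t : ℂ) * Complex.I)) : ℂ) * φ t

/-- Wirtinger derivative `f_z = (1/2)(∂ₓ - i ∂_y) f`. -/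
def wdz (f : ℂ → ℂ) (z : ℂ) : ℂ :=
  (1 / 2) * (fderiv ℝ f z 1 - Complex.I * fderiv ℝ f z Complex.I)

/-- Wirtinger derivative `f_z̄ = (1/2)(∂ₓ + i ∂_y) f`. -/
def wdzb (f : ℂ → ℂ) (z : ℂ) : ℂ :=
  (1 / 2) * (fderiv ℝ f z 1 + Complex.I * fderiv ℝ f z Complex.I)

/-- The angular derivative `f_θ(z) = i (z f_z(z) - z̄ f_z̄(z))`. -/
def fTheta (f : ℂ → ℂ) (z : ℂ) : ℂ :=
  Complex.I * (z * wdz f z - (starRingEnd ℂ) z * wdzb f z)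

/-- The radial derivative multiplied by `r`: `r f_r(z) = z f_z(z) + z̄ f_z̄(z)`. -/
def rFr (f : ℂ → ℂ) (z : ℂ) : ℂ :=
  z * wdz f z + (starRingEnd ℂ) z * wdzb f z

/-- `F : 𝕋 → ℂ` is absolutely continuous with angular derivative `Ḟ = Fd`,
i.e. `t ↦ F(e^{it})` is an indefinite integral of the (locally integrable,
2π-periodic) function `Fd`. -/
def IsACDeriv (F : ℂ → ℂ) (Fd : ℝ → ℂ) : Prop :=
  (∀ a b : ℝ, IntervalIntegrable Fd MeasureTheory.volume a b) ∧
  Function.Periodic Fd (2 * π) ∧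
  ∀ t : ℝ, F (Complex.exp ((t : ℂ) * Complex.I)) = F 1 + ∫ s in (0:ℝ)..t, Fd s

/-- membership in `L^p(𝕋)`, identifying `𝕋` with `[0, 2π)`. -/
def MemLpT (p : ℝ≥0∞) (φ : ℝ → ℂ) : Prop :=
  MeasureTheory.MemLp φ p (MeasureTheory.volume.restrict (Ioc (0:ℝ) (2 * π)))

/-- The integral mean `M_p(r, g)`. -/
def Mp (p : ℝ) (g : ℂ → ℂ) (r : ℝ) : ℝ :=
  ((1 / (2 * π)) * ∫ θ in (0:ℝ)..(2 * π),
      ‖g ((r : ℂ) * Complex.exp ((θ : ℂ) * Complex.I))‖ ^ p) ^ (1 / p)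

/-- The `L^p(𝕋)` norm `((1/2π) ∫ |φ|^p)^{1/p}`. -/
def lpNormT (p : ℝ) (φ : ℝ → ℂ) : ℝ :=
  ((1 / (2 * π)) * ∫ t in (0:ℝ)..(2 * π), ‖φ t‖ ^ p) ^ (1 / p)

/-- Membership in the analytic Hardy space `H^p(𝔻)` for `p ∈ [1, ∞)`. -/
def MemHp (p : ℝ) (g : ℂ → ℂ) : Prop :=
  DifferentiableOn ℂ g (ball (0:ℂ) 1) ∧ ∃ M : ℝ, ∀ r ∈ Ioo (0:ℝ) 1, Mp p g r ≤ M

/-- Membership in `H^∞(𝔻)`: bounded analytic functions on the unit disk. -/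
def MemHinf (g : ℂ → ℂ) : Prop :=
  DifferentiableOn ℂ g (ball (0:ℂ) 1) ∧ ∃ M : ℝ, ∀ z ∈ ball (0:ℂ) 1, ‖g z‖ ≤ M

/-- Harmonicity on the unit disk: `f` is C² with vanishing Laplacian. -/
def HarmonicOnD (f : ℂ → ℂ) : Prop :=
  ContDiffOn ℝ 2 f (ball (0:ℂ) 1) ∧
  ∀ z ∈ ball (0:ℂ) 1,
    fderiv ℝ (fun w => fderiv ℝ f w 1) z 1
      + fderiv ℝ (fun w => fderiv ℝ f w Complex.I) z Complex.I = 0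

/-- Membership in the harmonic Hardy space `h^p(𝔻)` for `p ∈ [1, ∞)`. -/
def Memhp (p : ℝ) (g : ℂ → ℂ) : Prop :=
  HarmonicOnD g ∧ ∃ M : ℝ, ∀ r ∈ Ioo (0:ℝ) 1, Mp p g r ≤ M

/-- Membership in `h^∞(𝔻)`: bounded harmonic functions on the unit disk. -/
def Memhinf (g : ℂ → ℂ) : Prop :=
  HarmonicOnD g ∧ ∃ M : ℝ, ∀ z ∈ ball (0:ℂ) 1, ‖g z‖ ≤ M

/-- `L` is the value of the principal-value Hilbert transform
`(1/2π) p.v. ∫ φ(t)/tan((θ-t)/2) dt` of (the 2π-periodic) `φ` at `θ`. -/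
def IsPVHilbert (φ : ℝ → ℂ) (θ : ℝ) (L : ℂ) : Prop :=
  Filter.Tendsto
    (fun ε : ℝ => (1 / (2 * π)) *
      ∫ t in Ioo (θ - π) (θ + π) \ Ioo (θ - ε) (θ + ε),
        φ t / (Real.tan ((θ - t) / 2) : ℂ))
    (nhdsWithin 0 (Ioi 0)) (nhds L)

/-!
The Poisson kernel is the real part of the Herglotz–Riesz kernel `(ζ + z) / (ζ - z)`, so `P[F]` is
half the sum of the holomorphic Herglotz integral of `F` and the conjugate of that of `conj F`. Only
the first survives in `f_z`, which is therefore the mean of `ζ / (ζ - z)² * F ζ` over the circle.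
Since `-i z ζ / (ζ - z)²` is the angular derivative of the Cauchy kernel `ζ / (ζ - z)`, integrating
by parts over a period shows that `i z f_z` is the Cauchy integral of `Ḟ`. For `F = |t|` we have
`Ḟ = sign t`, and the primitive `t - i log (1 - z / ζ)` of the Cauchy kernel evaluates that integral
as a difference of logarithms.
-/

section

open scoped ComplexConjugate

lemma wdz_congr {f g : ℂ → ℂ} {z : ℂ} (h : f =ᶠ[𝓝 z] g) : wdz f z = wdz g z := by
  rw [wdz, wdz, h.fderiv_eq]

lemma wdz_add_conj {g h : ℂ → ℂ} {g' h' z : ℂ} (hg : HasDerivAt g g' z) (hh : HasDerivAt h h' z) :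
    wdz (fun w ↦ g w + conj (h w)) z = g' := by
  have hg_real := hg.hasFDerivAt.restrictScalars ℝ
  have hh_real := conjCLE.toContinuousLinearMap.hasFDerivAt.comp z
    (hh.hasFDerivAt.restrictScalars ℝ)
  have hsum : HasFDerivAt (fun w ↦ g w + conj (h w)) _ z := hg_real.add hh_real
  rw [wdz, hsum.fderiv]
  simp only [add_apply, ContinuousLinearMap.coe_restrictScalars',
    ContinuousLinearMap.toSpanSingleton_apply, ContinuousLinearMap.comp_apply,
    ContinuousLinearEquiv.coe_coe, ContinuousAlgEquiv.coeCLE_apply, conjCAE_apply, smul_eq_mul,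
    one_mul, map_mul, conj_I]
  linear_combination (-g' / 2 + conj h' / 2) * I_mul_I

lemma circleIntegrable_conj {F : ℂ → ℂ} {c : ℂ} {R : ℝ} (hF : CircleIntegrable F c R) :
    CircleIntegrable (fun ζ ↦ conj (F ζ)) c R :=
  ⟨conjCLE.toContinuousLinearMap.integrable_comp hF.1,
    conjCLE.toContinuousLinearMap.integrable_comp hF.2⟩

lemma circleIntegrable_of_continuousOn_Icc {F : ℂ → ℂ} {c : ℂ} {R a : ℝ}
    (hF : ContinuousOn (fun t ↦ F (circleMap c R t)) (Icc a (a + 2 * π))) :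
    CircleIntegrable F c R := by
  have hperiod : a ≤ a + 2 * π := by linarith [Real.pi_pos]
  exact ((periodic_circleMap c R).comp F).intervalIntegrable Real.two_pi_pos.ne'
    (hF.intervalIntegrable_of_Icc hperiod) _ _

lemma poissonKer_mul_exp (z : ℂ) (t : ℝ) :
    poissonKer (z * exp (-(t : ℂ) * I)) = poissonKernel 0 z (circleMap 0 1 t) := by
  have hunit : exp (t * I) * exp (-(t : ℂ) * I) = 1 := by
    rw [← exp_add, neg_mul, add_neg_cancel, exp_zero]
  have hnorm : ‖exp (-(t : ℂ) * I)‖ = 1 := by rw [← ofReal_neg, norm_exp_ofReal_mul_I]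
  have hdist : ‖1 - z * exp (-(t : ℂ) * I)‖ = ‖circleMap 0 1 t - z‖ := by
    rw [← hunit, ← sub_mul, norm_mul, hnorm, mul_one, circleMap_zero, ofReal_one, one_mul]
  simp only [poissonKer, poissonKernel_def, hdist, norm_mul, hnorm, mul_one, sub_zero,
    norm_circleMap_zero, abs_one, one_pow]

lemma poissonInt_eq_circleAverage (F : ℂ → ℂ) (z : ℂ) :
    poissonInt F z = Real.circleAverage (fun ζ ↦ (poissonKernel 0 z ζ : ℂ) * F ζ) 0 1 := by
  have hexp (t : ℝ) : exp (t * I) = circleMap 0 1 t := by simp [circleMap_zero]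
  simp only [poissonInt, Real.circleAverage_def, poissonKer_mul_exp, hexp, real_smul]
  simp

/-- The Herglotz–Riesz integral of a boundary function `F` on the unit circle, the mean of
`(ζ + z) / (ζ - z) * F ζ` over `|ζ| = 1`. -/
def herglotzInt (F : ℂ → ℂ) (z : ℂ) : ℂ :=
  Real.circleAverage (fun ζ ↦ herglotzRieszKernel 0 z ζ • F ζ) 0 1

lemma hasDerivAt_herglotzInt {F : ℂ → ℂ} {z : ℂ} (hF : CircleIntegrable F 0 1) (hz : ‖z‖ < 1) :
    HasDerivAt (herglotzInt F) (Real.circleAverage (fun ζ ↦ (2 * ζ / (ζ - z) ^ 2) • F ζ) 0 1) z :=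
  hasDerivAt_circleAverage_herglotzRieszKernel_smul hF (mem_ball_zero_iff.2 hz)

lemma circleIntegrable_herglotzRieszKernel_smul {F : ℂ → ℂ} {c z : ℂ} {R : ℝ}
    (hF : CircleIntegrable F c R) (hz : z ∈ ball c R) :
    CircleIntegrable (fun ζ ↦ herglotzRieszKernel c z ζ • F ζ) c R :=
  hF.fun_continuousOn_smul (continuousOn_herglotzRieszKernel_sphere hz)

lemma poissonKernel_eq_herglotzRieszKernel_add_conj (c w ζ : ℂ) :
    (poissonKernel c w ζ : ℂ) =
      (herglotzRieszKernel c w ζ + conj (herglotzRieszKernel c w ζ)) / 2 := by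
  rw [poissonKernel_eq_re_herglotzRieszKernel, Function.comp_apply, re_eq_add_conj]

lemma poissonInt_eq_herglotzInt_add_conj {F : ℂ → ℂ} {z : ℂ}
    (hF : CircleIntegrable F 0 1) (hz : ‖z‖ < 1) :
    poissonInt F z = herglotzInt F z / 2 + conj (herglotzInt (fun ζ ↦ conj (F ζ)) z / 2) := by
  have hz_ball : z ∈ ball (0 : ℂ) 1 := mem_ball_zero_iff.2 hz
  have hK := circleIntegrable_herglotzRieszKernel_smul hF hz_ball
  have hK_conj := circleIntegrable_herglotzRieszKernel_smul (circleIntegrable_conj hF) hz_ball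
  have hcomm := conjCLE.toContinuousLinearMap.circleAverage_comp_comm hK_conj
  have hsplit (ζ : ℂ) : (poissonKernel 0 z ζ : ℂ) * F ζ = (1 / 2 : ℂ) •
      (herglotzRieszKernel 0 z ζ • F ζ + conj (herglotzRieszKernel 0 z ζ • conj (F ζ))) := by
    rw [poissonKernel_eq_herglotzRieszKernel_add_conj]
    simp only [smul_eq_mul, map_mul, conj_conj]
    ring
  calc poissonInt F z
      = (1 / 2 : ℂ) • (herglotzInt F z +
          Real.circleAverage (fun ζ ↦ conj (herglotzRieszKernel 0 z ζ • conj (F ζ))) 0 1) := by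
        simp only [poissonInt_eq_circleAverage, hsplit]
        rw [Real.circleAverage_fun_smul,
          Real.circleAverage_fun_add hK (circleIntegrable_conj hK_conj), herglotzInt]
    _ = (1 / 2 : ℂ) • (herglotzInt F z + conj (herglotzInt (fun ζ ↦ conj (F ζ)) z)) :=
        congrArg (fun w ↦ (1 / 2 : ℂ) • (herglotzInt F z + w)) hcomm
    _ = _ := by
        rw [smul_eq_mul, map_div₀, map_ofNat]
        ring

theorem wdz_poissonInt {F : ℂ → ℂ} {z : ℂ} (hF : CircleIntegrable F 0 1) (hz : ‖z‖ < 1) :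
    wdz (poissonInt F) z = Real.circleAverage (fun ζ ↦ ζ / (ζ - z) ^ 2 * F ζ) 0 1 := by
  have hlocal : poissonInt F =ᶠ[𝓝 z]
      fun w ↦ herglotzInt F w / 2 + conj (herglotzInt (fun ζ ↦ conj (F ζ)) w / 2) := by
    filter_upwards [isOpen_ball.mem_nhds (mem_ball_zero_iff.2 hz)] with w hw
    exact poissonInt_eq_herglotzInt_add_conj hF (mem_ball_zero_iff.1 hw)
  rw [wdz_congr hlocal, wdz_add_conj ((hasDerivAt_herglotzInt hF hz).div_const 2)
    ((hasDerivAt_herglotzInt (circleIntegrable_conj hF) hz).div_const 2), div_eq_inv_mul,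
    ← smul_eq_mul, ← Real.circleAverage_fun_smul]
  congr 1 with ζ
  simp only [smul_eq_mul]
  ring

/-- The Cauchy kernel `ζ / (ζ - z)` of the circles centred at `0`: on `|ζ| = 1` it equals
`1 / (1 - z * conj ζ)`, and its mean against `φ` is the Cauchy integral of `φ` at `z`. -/
def cauchyKer (z ζ : ℂ) : ℂ := ζ / (ζ - z)

lemma hasDerivAt_cauchyKer_circleMap {z : ℂ} {R t : ℝ} (hz : circleMap 0 R t ≠ z) :
    HasDerivAt (fun t ↦ cauchyKer z (circleMap 0 R t))
      (-(I * z * (circleMap 0 R t / (circleMap 0 R t - z) ^ 2))) t := by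
  have hζ := hasDerivAt_circleMap 0 R t
  have hne : circleMap 0 R t - z ≠ 0 := sub_ne_zero.2 hz
  refine (hζ.div (hζ.sub_const z) hne).congr_deriv ?_
  field_simp
  ring

lemma circleMap_sub_ne_zero {z : ℂ} {R : ℝ} (hz : ‖z‖ < R) (t : ℝ) : circleMap 0 R t - z ≠ 0 :=
  sub_ne_zero.2 (circleMap_ne_mem_ball (mem_ball_zero_iff.2 hz) t)

lemma continuous_cauchyKer_circleMap {z : ℂ} {R : ℝ} (hz : ‖z‖ < R) :
    Continuous fun t ↦ cauchyKer z (circleMap 0 R t) :=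
  (continuous_circleMap 0 R).div (by fun_prop) (circleMap_sub_ne_zero hz)

lemma integral_deriv_mul_cauchyKer {F : ℂ → ℂ} {F' : ℝ → ℂ} {a R : ℝ} {s : Set ℝ} {z : ℂ}
    (hs : s.Countable)
    (hF : ContinuousOn (fun t ↦ F (circleMap 0 R t)) (Icc a (a + 2 * π)))
    (hF' : ∀ t ∈ Ioo a (a + 2 * π) \ s, HasDerivAt (fun t ↦ F (circleMap 0 R t)) (F' t) t)
    (hF'_int : IntervalIntegrable F' volume a (a + 2 * π)) (hz : ‖z‖ < R) :
    ∫ t in a..a + 2 * π, F' t * cauchyKer z (circleMap 0 R t) =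
      I * z * ∫ t in a..a + 2 * π,
        circleMap 0 R t / (circleMap 0 R t - z) ^ 2 * F (circleMap 0 R t) := by
  have hperiod : a ≤ a + 2 * π := by linarith [Real.pi_pos]
  have hne := circleMap_sub_ne_zero hz
  have hκ := continuous_cauchyKer_circleMap hz
  have hκ' : Continuous fun t ↦ circleMap 0 R t / (circleMap 0 R t - z) ^ 2 :=
    (continuous_circleMap 0 R).div (by fun_prop) fun t ↦ pow_ne_zero 2 (hne t)
  have hleft := hF'_int.mul_continuousOn hκ.continuousOn
  have hright : IntervalIntegrable (fun t ↦ I * z *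
      (circleMap 0 R t / (circleMap 0 R t - z) ^ 2 * F (circleMap 0 R t))) volume
      a (a + 2 * π) :=
    ((hκ'.continuousOn.mul hF).intervalIntegrable_of_Icc hperiod).const_mul _
  rw [← intervalIntegral.integral_const_mul, ← sub_eq_zero,
    ← intervalIntegral.integral_sub hleft hright, integral_eq_of_hasDerivAt_off_countable_of_le
      (fun t ↦ F (circleMap 0 R t) * cauchyKer z (circleMap 0 R t)) _ hperiod hs
      (hF.mul hκ.continuousOn) _ (hleft.sub hright), periodic_circleMap 0 R a, sub_self]
  intro t ht
  refine ((hF' t ht).mul (hasDerivAt_cauchyKer_circleMap (sub_ne_zero.1 (hne t)))).congr_deriv ?_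
  ring

theorem I_mul_mul_wdz_poissonInt {F : ℂ → ℂ} {F' : ℝ → ℂ} {a : ℝ} {s : Set ℝ} {z : ℂ}
    (hs : s.Countable)
    (hF : ContinuousOn (fun t ↦ F (circleMap 0 1 t)) (Icc a (a + 2 * π)))
    (hF' : ∀ t ∈ Ioo a (a + 2 * π) \ s, HasDerivAt (fun t ↦ F (circleMap 0 1 t)) (F' t) t)
    (hF'_int : IntervalIntegrable F' volume a (a + 2 * π)) (hz : ‖z‖ < 1) :
    I * z * wdz (poissonInt F) z =
      (1 / (2 * π)) * ∫ t in a..a + 2 * π, F' t * cauchyKer z (circleMap 0 1 t) := by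
  rw [wdz_poissonInt (circleIntegrable_of_continuousOn_Icc hF) hz,
    integral_deriv_mul_cauchyKer hs hF hF' hF'_int hz, Real.circleAverage_eq_integral_add a,
    intervalIntegral.integral_comp_add_right
      (fun t ↦ circleMap 0 1 t / (circleMap 0 1 t - z) ^ 2 * F (circleMap 0 1 t)),
    zero_add, add_comm (2 * π), real_smul]
  push_cast
  ring

lemma one_sub_div_circleMap_mem_slitPlane {z : ℂ} {R : ℝ} (hz : ‖z‖ < R) (t : ℝ) :
    1 - z / circleMap 0 R t ∈ slitPlane := by
  have hR : 0 < R := (norm_nonneg z).trans_lt hz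
  rw [sub_eq_add_neg]
  apply mem_slitPlane_of_norm_lt_one
  rwa [norm_neg, norm_div, norm_circleMap_zero, abs_of_pos hR, div_lt_one hR]

lemma integral_cauchyKer_circleMap {z : ℂ} {R : ℝ} (hz : ‖z‖ < R) (a b : ℝ) :
    ∫ t in a..b, cauchyKer z (circleMap 0 R t) =
      (b - I * log (1 - z / circleMap 0 R b)) - (a - I * log (1 - z / circleMap 0 R a)) := by
  refine intervalIntegral.integral_eq_sub_of_hasDerivAt
    (f := fun t : ℝ ↦ (t : ℂ) - I * log (1 - z / circleMap 0 R t)) (fun t _ ↦ ?_)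
    ((continuous_cauchyKer_circleMap hz).intervalIntegrable a b)
  have hζ : circleMap 0 R t ≠ 0 := circleMap_ne_center ((norm_nonneg z).trans_lt hz).ne'
  have hne := circleMap_sub_ne_zero hz t
  have hslit := one_sub_div_circleMap_mem_slitPlane hz t
  have hlog := (((hasDerivAt_circleMap 0 R t).inv hζ).const_mul z |>.const_sub 1).clog_real hslit
  refine (ofRealCLM.hasDerivAt.sub (hlog.const_mul I)).congr_deriv ?_
  rw [cauchyKer, Pi.inv_apply, ← div_eq_mul_inv, ofRealCLM_apply, ofReal_one]
  field_simp [slitPlane_ne_zero hslit]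
  linear_combination (-z) * I_sq

lemma monotone_sign_cast : Monotone fun t : ℝ ↦ (SignType.sign t : ℝ) := by
  intro s t hst
  have hsign := SignType.sign.monotone hst
  dsimp only
  generalize SignType.sign s = σ at hsign ⊢
  generalize SignType.sign t = τ at hsign ⊢
  cases σ <;> cases τ <;> simp_all

lemma intervalIntegrable_sign (a b : ℝ) :
    IntervalIntegrable (fun t : ℝ ↦ ((SignType.sign t : ℝ) : ℂ)) volume a b :=
  have hsign : IntervalIntegrable (fun t : ℝ ↦ (SignType.sign t : ℝ)) volume a b :=
    monotone_sign_cast.intervalIntegrable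
  ⟨hsign.1.ofReal, hsign.2.ofReal⟩

lemma integral_sign_mul {g : ℝ → ℂ} {a : ℝ} (ha : 0 ≤ a)
    (hg : IntervalIntegrable g volume (-a) a) :
    ∫ t in -a..a, ((SignType.sign t : ℝ) : ℂ) * g t = (∫ t in 0..a, g t) - ∫ t in -a..0, g t := by
  have hzero : (0 : ℝ) ∈ uIcc (-a) a := mem_uIcc_of_le (neg_nonpos.2 ha) ha
  have hneg : EqOn (fun t ↦ -g t) (fun t ↦ ((SignType.sign t : ℝ) : ℂ) * g t) (uIoo (-a) 0) := by
    rw [uIoo_of_le (neg_nonpos.2 ha)]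
    exact fun t ht ↦ by simp [sign_neg ht.2]
  have hpos : EqOn g (fun t ↦ ((SignType.sign t : ℝ) : ℂ) * g t) (uIoo 0 a) := by
    rw [uIoo_of_le ha]
    exact fun t ht ↦ by simp [sign_pos ht.1]
  have hg_neg := hg.mono_set (uIcc_subset_uIcc_left hzero)
  have hg_pos := hg.mono_set (uIcc_subset_uIcc_right hzero)
  rw [← intervalIntegral.integral_add_adjacent_intervals (hg_neg.neg.congr_uIoo hneg)
      (hg_pos.congr_uIoo hpos), ← intervalIntegral.integral_congr_uIoo hneg,
    ← intervalIntegral.integral_congr_uIoo hpos, intervalIntegral.integral_neg]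
  ring

lemma log_one_add_div_one_sub {z : ℂ} (hz : ‖z‖ < 1) :
    log ((1 + z) / (1 - z)) = log (1 + z) - log (1 - z) := by
  have h := hasSum_arctan_aux (z := -(z * I)) (by simpa using hz)
  have hrot : -(z * I) * I = z := by linear_combination (-z) * I_mul_I
  rwa [hrot, ← sub_eq_add_neg, eq_comm] at h

lemma hasSum_log_one_add_div_one_sub {z : ℂ} (hz : ‖z‖ < 1) :
    HasSum (fun n : ℕ ↦ z ^ (2 * n + 1) / (2 * (n : ℂ) + 1)) (log ((1 + z) / (1 - z)) / 2) := by
  have h := (hasSum_arctan (z := -(z * I)) (by simpa using hz)).mul_left I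
  have hrot : -(z * I) * I = z := by linear_combination (-z) * I_mul_I
  have hpow (n : ℕ) : (-(z * I)) ^ (2 * n + 1) = (-1) ^ n * (-(z ^ (2 * n + 1) * I)) := by
    rw [pow_succ, pow_mul, neg_sq, mul_pow, I_sq, mul_neg_one, neg_pow]
    ring
  have hsign (n : ℕ) : (-1 : ℂ) ^ n * (-1) ^ n = 1 := by rw [← mul_pow]; simp
  have hval : I * arctan (-(z * I)) = log ((1 + z) / (1 - z)) / 2 := by
    rw [arctan, hrot]
    linear_combination (-log ((1 + z) / (1 - z)) / 2) * I_mul_I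
  rw [hval] at h
  refine h.congr_fun fun n ↦ ?_
  rw [hpow]
  push_cast
  linear_combination (I * I * z ^ (2 * n + 1) / (2 * n + 1)) * hsign n +
    (z ^ (2 * n + 1) / (2 * n + 1)) * I_mul_I

lemma integral_sign_mul_cauchyKer {z : ℂ} (hz : ‖z‖ < 1) :
    ∫ t in -π..π, ((SignType.sign t : ℝ) : ℂ) * cauchyKer z (circleMap 0 1 t) =
      -(2 * I) * log ((1 + z) / (1 - z)) := by
  have hpi : circleMap 0 1 π = -1 := by simp [circleMap_zero]
  have hneg_pi : circleMap 0 1 (-π) = -1 := by simp [circleMap_zero, exp_neg]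
  have hzero : circleMap 0 1 0 = 1 := by simp [circleMap_zero]
  rw [integral_sign_mul Real.pi_pos.le ((continuous_cauchyKer_circleMap hz).intervalIntegrable _ _),
    integral_cauchyKer_circleMap hz, integral_cauchyKer_circleMap hz, hpi, hneg_pi, hzero,
    log_one_add_div_one_sub hz, div_neg, div_one, sub_neg_eq_add]
  push_cast
  ring

theorem I_mul_mul_wdz_poissonInt_abs {F : ℂ → ℂ} {z : ℂ}
    (hF : ∀ t ∈ Icc (-π) π, F (exp (t * I)) = (|t| : ℝ)) (hz : ‖z‖ < 1) :
    I * z * wdz (poissonInt F) z = -(I / π) * log ((1 + z) / (1 - z)) := by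
  have hperiod : -π + 2 * π = π := by ring
  have hcircle : EqOn (fun t ↦ F (circleMap 0 1 t)) (fun t ↦ ((|t| : ℝ) : ℂ))
      (Icc (-π) π) := fun t ht ↦ by
    simpa only [circleMap_zero, ofReal_one, one_mul] using hF t ht
  have hcont : ContinuousOn (fun t ↦ F (circleMap 0 1 t)) (Icc (-π) π) :=
    (continuous_ofReal.comp continuous_abs).continuousOn.congr hcircle
  have hderiv (t : ℝ) (ht : t ∈ Ioo (-π) π \ {0}) :
      HasDerivAt (fun t ↦ F (circleMap 0 1 t)) (SignType.sign t : ℝ) t :=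
    (hasDerivAt_abs ht.2).ofReal_comp.congr_of_eventuallyEq
      (hcircle.eventuallyEq_of_mem (Icc_mem_nhds ht.1.1 ht.1.2))
  have hparts := I_mul_mul_wdz_poissonInt (a := -π) (countable_singleton 0)
    (by simpa only [hperiod] using hcont) (by simpa only [hperiod] using hderiv)
    (intervalIntegrable_sign _ _) hz
  rw [hparts, hperiod, integral_sign_mul_cauchyKer hz]
  field_simp

lemma tendsto_log_one_add_div_one_sub :
    Tendsto (fun r : ℝ ↦ Real.log ((1 + r) / (1 - r))) (𝓝[<] 1) atTop := by
  refine Real.tendsto_log_atTop.comp ?_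
  have hnum : Tendsto (fun r : ℝ ↦ 1 + r) (𝓝[<] 1) (𝓝 (1 + 1)) :=
    (tendsto_id.mono_left nhdsWithin_le_nhds).const_add 1
  have hden_nhds : Tendsto (fun r : ℝ ↦ 1 - r) (𝓝[<] 1) (𝓝 (1 - 1)) :=
    (tendsto_id.mono_left nhdsWithin_le_nhds).const_sub 1
  rw [sub_self] at hden_nhds
  have hden : Tendsto (fun r : ℝ ↦ 1 - r) (𝓝[<] 1) (𝓝[>] 0) :=
    tendsto_nhdsWithin_iff.2 ⟨hden_nhds, eventually_mem_nhdsWithin.mono fun _ hr ↦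
      mem_Ioi.2 (sub_pos.2 (mem_Iio.1 hr))⟩
  exact hnum.pos_mul_atTop (by norm_num) hden.inv_tendsto_nhdsGT_zero

lemma norm_log_one_add_div_one_sub {r : ℝ} (hr : r ∈ Ico 0 1) :
    ‖log ((1 + r) / (1 - r))‖ = Real.log ((1 + r) / (1 - r)) := by
  obtain ⟨hr₀, hr₁⟩ := hr
  have hone : 1 ≤ (1 + r) / (1 - r) := (one_le_div (by linarith)).2 (by linarith)
  have hcast : log ((1 + r) / (1 - r)) = (Real.log ((1 + r) / (1 - r)) : ℝ) := by
    rw [ofReal_log (by linarith)]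
    push_cast
    rfl
  rw [hcast, norm_real, Real.norm_of_nonneg (Real.log_nonneg hone)]

theorem tendsto_norm_wdz_poissonInt_abs {F : ℂ → ℂ}
    (hF : ∀ t ∈ Icc (-π) π, F (exp (t * I)) = (|t| : ℝ)) :
    Tendsto (fun r : ℝ ↦ ‖wdz (poissonInt F) r‖) (𝓝[<] 1) atTop := by
  refine tendsto_atTop_mono' _ ?_
    (tendsto_log_one_add_div_one_sub.const_mul_atTop (inv_pos.2 Real.pi_pos))
  filter_upwards [Ioo_mem_nhdsLT zero_lt_one] with r hr
  have hr_norm : ‖(r : ℂ)‖ = r := Complex.norm_of_nonneg hr.1.le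
  calc π⁻¹ * Real.log ((1 + r) / (1 - r))
      = ‖I * r * wdz (poissonInt F) r‖ := by
        rw [I_mul_mul_wdz_poissonInt_abs hF (hr_norm.trans_lt hr.2), norm_mul,
          norm_log_one_add_div_one_sub (Ioo_subset_Ico_self hr), norm_neg, norm_div, norm_I,
          norm_real, Real.norm_of_nonneg Real.pi_pos.le, one_div]
    _ = r * ‖wdz (poissonInt F) r‖ := by rw [norm_mul, norm_mul, norm_I, one_mul, hr_norm]
    _ ≤ ‖wdz (poissonInt F) r‖ := mul_le_of_le_one_left (norm_nonneg _) hr.2.le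

end

/-- Let `F(e^{it}) = |t|` for `t ∈ [-π, π]` and `f = P[F]`. Then for
every `z ∈ 𝔻`, `i z f_z(z) = -(2i/π) Σ_{n≥0} z^{2n+1}/(2n+1) = -(i/π) log((1+z)/(1-z))`;
in particular `|f_z(r)| → ∞` as `r → 1⁻`, so `f_z` is not bounded on `𝔻`. -/
theorem stmt14 (F : ℂ → ℂ)
    (hFval : ∀ t ∈ Icc (-π) π, F (Complex.exp ((t : ℂ) * Complex.I)) = ((|t| : ℝ) : ℂ)) :
    (∀ z ∈ ball (0:ℂ) 1,
      (Complex.I * z * wdz (poissonInt F) z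
          = -(2 * Complex.I / (π : ℂ)) * ∑' n : ℕ, z ^ (2 * n + 1) / (2 * (n : ℂ) + 1)) ∧
      (Complex.I * z * wdz (poissonInt F) z
          = -(Complex.I / (π : ℂ)) * Complex.log ((1 + z) / (1 - z)))) ∧
    Filter.Tendsto (fun r : ℝ => ‖wdz (poissonInt F) ((r : ℂ))‖)
      (nhdsWithin 1 (Iio 1)) Filter.atTop ∧
    ¬ ∃ M : ℝ, ∀ z ∈ ball (0:ℂ) 1, ‖wdz (poissonInt F) z‖ ≤ M := by
  have hlog : ∀ z ∈ ball (0:ℂ) 1,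
      I * z * wdz (poissonInt F) z = -(I / (π : ℂ)) * log ((1 + z) / (1 - z)) :=
    fun z hz ↦ I_mul_mul_wdz_poissonInt_abs hFval (mem_ball_zero_iff.1 hz)
  have hblowup := tendsto_norm_wdz_poissonInt_abs hFval
  refine ⟨fun z hz ↦ ⟨?_, hlog z hz⟩, hblowup, ?_⟩
  · rw [hlog z hz, (hasSum_log_one_add_div_one_sub (mem_ball_zero_iff.1 hz)).tsum_eq]
    ring
  · rintro ⟨M, hM⟩
    obtain ⟨r, hr_gt, hr⟩ :=
      ((hblowup.eventually_gt_atTop M).and (Ioo_mem_nhdsLT zero_lt_one)).exists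
    refine hr_gt.not_ge (hM r ?_)
    rw [mem_ball_zero_iff, Complex.norm_of_nonneg hr.1.le]
    exact hr.2

end
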